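/- arXiv:0807.0022 — 7 statements merged into one kernel-verified Lean document; each statement's English description precedes it below -/
import Mathlib

section
/- Let n ≥ 1, α ∈ (0,2], β > 0, and fix u, v ∈ ℝⁿ. Then lim_{ε→0⁺} ε^{−α}[ C_{α,β}(ε(u−v)) − C_{α,β}(εu) − C_{α,β}(εv) + 1 ] = β( ‖u‖^α + ‖v‖^α − ‖u−v‖^α ). (Up to the factor 2β, the right-hand side is the covariance of the Lévy fractional Brownian field of index α/2; this identifies the tangent field of GFGCC and shows GFGCC is locally asymptotically self-similar of order α/2.) -/
open Filter

lemma gfgcc_aux {n : ℕ} (α β : ℝ) (hα : 0 < α) (w : EuclideanSpace ℝ (Fin n)) :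
    Tendsto (fun ε : ℝ => ε ^ (-α) * ((1 + ‖ε • w‖ ^ α) ^ (-β) - 1))
      (nhdsWithin 0 (Set.Ioi 0)) (nhds (-β * ‖w‖ ^ α)) := by
  have h0 : HasDerivAt (fun t : ℝ => 1 + t * ‖w‖ ^ α) (‖w‖ ^ α) 0 := by
    simpa using ((hasDerivAt_id (0 : ℝ)).mul_const (‖w‖ ^ α)).const_add 1
  have h1 : HasDerivAt (fun t : ℝ => (1 + t * ‖w‖ ^ α) ^ (-β)) (-β * ‖w‖ ^ α) 0 := by
    have := h0.rpow_const (p := -β) (Or.inl (by simp))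
    convert this using 1
    simp [mul_comm]
  have h2 := h1.tendsto_slope_zero_right
  have h3 : Tendsto (fun ε : ℝ => ε ^ α) (nhdsWithin 0 (Set.Ioi 0))
      (nhdsWithin 0 (Set.Ioi 0)) := by
    apply tendsto_nhdsWithin_of_tendsto_nhds_of_eventually_within
    · have := (Real.continuousAt_rpow_const 0 α (Or.inr hα.le)).tendsto
      rw [Real.zero_rpow hα.ne'] at this
      exact this.mono_left nhdsWithin_le_nhds
    · filter_upwards [self_mem_nhdsWithin] with ε hε
      exact Real.rpow_pos_of_pos hε α
  refine (h2.comp h3).congr' ?_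
  filter_upwards [self_mem_nhdsWithin] with ε hε
  have hε' : (0 : ℝ) < ε := hε
  simp [norm_smul, abs_of_pos hε', Real.mul_rpow hε'.le (norm_nonneg w), Real.rpow_neg hε'.le]

/-- The GFGCC is locally asymptotically self-similar of order `α/2`: for `α ∈ (0,2]`, `β > 0`
and fixed `u, v ∈ ℝⁿ`,
`lim_{ε→0⁺} ε^{−α}[C_{α,β}(ε(u−v)) − C_{α,β}(εu) − C_{α,β}(εv) + 1]
  = β(‖u‖^α + ‖v‖^α − ‖u−v‖^α)`,
which (up to the factor `2β`) is the covariance of the Lévy fractional Brownian field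
of index `α/2`. -/
theorem gfgcc_tangent_field (n : ℕ) (hn : 1 ≤ n) (α β : ℝ)
    (hα : α ∈ Set.Ioc (0 : ℝ) 2) (hβ : 0 < β) (u v : EuclideanSpace ℝ (Fin n)) :
    Tendsto (fun ε : ℝ => ε ^ (-α) *
        ((1 + ‖ε • (u - v)‖ ^ α) ^ (-β) - (1 + ‖ε • u‖ ^ α) ^ (-β)
          - (1 + ‖ε • v‖ ^ α) ^ (-β) + 1))
      (nhdsWithin 0 (Set.Ioi 0))
      (nhds (β * (‖u‖ ^ α + ‖v‖ ^ α - ‖u - v‖ ^ α))) := by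
  have h := ((gfgcc_aux α β hα.1 (u - v)).sub (gfgcc_aux α β hα.1 u)).sub
    (gfgcc_aux α β hα.1 v)
  convert h using 1
  · funext ε
    ring
  · congr 1
    ring
end

section
/- Let α ∈ (0,2), β > 0 and ω > 0. Then the improper integral lim_{R→∞} ∫₀^R cos(ωt) (1 + t^α)^{−β} dt exists and equals −Im ∫₀^∞ e^{−ωu} (1 + e^{iπα/2} u^α)^{−β} du, where (1 + e^{iπα/2} u^α)^{−β} denotes the principal branch of the complex power (note that 1 + e^{iπα/2}u^α has positive imaginary part for u > 0, so it never lies on the negative real axis). (This contour-rotation identity expresses the spectral density of the one-dimensional GFGCC as an absolutely convergent Laplace-type integral.) -/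
open Filter intervalIntegral

/-- The integrand on the closed first quadrant. -/
noncomputable def gfF (α β ω : ℝ) (z : ℂ) : ℂ :=
  Complex.exp (ω * z * Complex.I) * (1 + z ^ (α : ℂ)) ^ (-(β : ℂ))

lemma gf_slit (α : ℝ) (h0 : 0 < α) (h2 : α < 2) (z : ℂ) (hr : 0 ≤ z.re) (hi : 0 ≤ z.im) :
    1 + z ^ (α : ℂ) ∈ Complex.slitPlane := by
  by_cases hz : z = 0
  · subst hz
    rw [Complex.zero_cpow (by exact_mod_cast h0.ne')]
    simp
  have ha0 : 0 ≤ z.arg := Complex.arg_nonneg_iff.2 hi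
  have ha1 : z.arg ≤ Real.pi / 2 := Complex.arg_le_pi_div_two_iff.2 (Or.inl hr)
  have hn : 0 < ‖z‖ := norm_pos_iff.2 hz
  have hp : 0 < ‖z‖ ^ α := Real.rpow_pos_of_pos hn α
  have hlt : z.arg * α < Real.pi := by nlinarith [Real.pi_pos]
  have hge : 0 ≤ z.arg * α := by positivity
  rw [Complex.cpow_ofReal, Complex.mem_slitPlane_iff]
  rcases hge.eq_or_lt with h | h
  · left
    rw [← h]
    simp
    positivity
  · right
    have := Real.sin_pos_of_pos_of_lt_pi h hlt
    have h3 : (1 + ((‖z‖ ^ α : ℝ) : ℂ) * (Real.cos (z.arg * α) + Real.sin (z.arg * α) * Complex.I)).im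
      = ‖z‖ ^ α * Real.sin (z.arg * α) := by
      simp [-Complex.ofReal_cos, -Complex.ofReal_sin]
    rw [h3]
    positivity

lemma gf_cont (α β ω : ℝ) (h0 : 0 < α) (h2 : α < 2) (z : ℂ) (hr : 0 ≤ z.re) (hi : 0 ≤ z.im) :
    ContinuousAt (gfF α β ω) z := by
  unfold gfF
  have h1 : ContinuousAt (fun z : ℂ => z ^ (α : ℂ)) z := by
    have := Complex.continuousAt_cpow_of_re_pos (p := (z, (α : ℂ))) (Or.inl hr) (by simpa using h0)
    exact ContinuousAt.comp (f := fun z : ℂ => (z, (α : ℂ))) this (by fun_prop)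
  refine ContinuousAt.mul (by fun_prop) ?_
  exact ContinuousAt.cpow (by fun_prop) continuousAt_const (gf_slit α h0 h2 z hr hi)

lemma gf_diff (α β ω : ℝ) (h0 : 0 < α) (h2 : α < 2) (z : ℂ) (hr : 0 < z.re) (hi : 0 ≤ z.im) :
    DifferentiableAt ℂ (gfF α β ω) z := by
  unfold gfF
  have h1 : DifferentiableAt ℂ (fun z : ℂ => z ^ (α : ℂ)) z :=
    differentiableAt_id.cpow (by fun_prop) (Or.inl hr)
  refine DifferentiableAt.mul (by fun_prop) ?_
  exact DifferentiableAt.cpow (by fun_prop) (by fun_prop) (gf_slit α h0 h2 z hr.le hi)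

lemma gf_norm (α β ω : ℝ) (h0 : 0 < α) (h2 : α < 2) (hβ : 0 < β) (R : ℝ) (hR : 0 < R)
    (hR1 : 1 < R ^ α) (z : ℂ) (hr : 0 ≤ z.re) (hi : 0 ≤ z.im) (hz : R ≤ ‖z‖) :
    ‖gfF α β ω z‖ ≤ Real.exp (-(ω * z.im)) * (R ^ α - 1) ^ (-β) := by
  unfold gfF
  rw [norm_mul, Complex.norm_exp]
  have e : (↑ω * z * Complex.I).re = -(ω * z.im) := by simp
  rw [e]
  gcongr
  have hne := Complex.slitPlane_ne_zero (gf_slit α h0 h2 z hr hi)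
  rw [Complex.norm_cpow_of_ne_zero hne]
  have hzne : z ≠ 0 := norm_pos_iff.1 (hR.trans_le hz)
  have hzn : ‖z ^ (α : ℂ)‖ = ‖z‖ ^ α := by
    rw [Complex.norm_cpow_of_ne_zero hzne]; simp
  have hle : R ^ α ≤ ‖z‖ ^ α := Real.rpow_le_rpow hR.le hz h0.le
  have htri : ‖z ^ (α : ℂ)‖ - 1 ≤ ‖1 + z ^ (α : ℂ)‖ := by
    have := norm_sub_le (1 + z ^ (α : ℂ)) 1
    simp only [add_sub_cancel_left, norm_one] at this
    linarith
  simp only [Complex.neg_re, Complex.ofReal_re, Complex.neg_im, Complex.ofReal_im, neg_zero,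
    mul_zero, Real.exp_zero, div_one]
  exact Real.rpow_le_rpow_of_nonpos (by linarith) (by linarith) (by linarith)

lemma gf_rect (α β ω : ℝ) (h0 : 0 < α) (h2 : α < 2) (R : ℝ) (hR : 0 < R) :
    (∫ x in (0 : ℝ)..R, gfF α β ω x) = (∫ x in (0 : ℝ)..R, gfF α β ω (x + R * Complex.I))
      - Complex.I * (∫ y in (0 : ℝ)..R, gfF α β ω (R + y * Complex.I))
      + Complex.I * (∫ y in (0 : ℝ)..R, gfF α β ω (y * Complex.I)) := by
  have := Complex.integral_boundary_rect_eq_zero_of_continuousOn_of_differentiableOn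
    (gfF α β ω) 0 (R + R * Complex.I) ?_ ?_
  · simp at this
    linear_combination this
  · intro z hz
    simp [Complex.mem_reProdIm, Set.uIcc_of_le hR.le] at hz
    exact (gf_cont α β ω h0 h2 z hz.1.1 hz.2.1).continuousWithinAt
  · intro z hz
    simp [Complex.mem_reProdIm, hR.le] at hz
    exact (gf_diff α β ω h0 h2 z hz.1.1 hz.2.1.le).differentiableWithinAt

lemma gf_top (α β ω : ℝ) (h0 : 0 < α) (h2 : α < 2) (hβ : 0 < β) (hω : 0 < ω) :
    Tendsto (fun R : ℝ => ∫ x in (0 : ℝ)..R, gfF α β ω (x + R * Complex.I)) atTop (nhds 0) := by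
  have hM : Tendsto (fun R : ℝ => (R ^ α - 1) ^ (-β)) atTop (nhds 0) :=
    (tendsto_rpow_neg_atTop hβ).comp (tendsto_atTop_add_const_right _ (-1) (tendsto_rpow_atTop h0))
  have hE : Tendsto (fun R : ℝ => R * Real.exp (-(ω * R))) atTop (nhds 0) := by
    have := tendsto_rpow_mul_exp_neg_mul_atTop_nhds_zero 1 ω hω
    simpa using this
  refine squeeze_zero_norm' (a := fun R : ℝ => R * Real.exp (-(ω * R)) * (R ^ α - 1) ^ (-β)) ?_
    (by simpa using hE.mul hM)
  filter_upwards [eventually_gt_atTop 0, (tendsto_rpow_atTop h0).eventually_gt_atTop 1]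
    with R hR hR1
  have := intervalIntegral.norm_integral_le_of_norm_le_const (a := 0) (b := R)
    (f := fun x : ℝ => gfF α β ω (x + R * Complex.I))
    (C := Real.exp (-(ω * R)) * (R ^ α - 1) ^ (-β)) ?_
  · rw [sub_zero, abs_of_pos hR] at this
    linarith
  · intro x hx
    rw [Set.uIoc_of_le hR.le] at hx
    have := gf_norm α β ω h0 h2 hβ R hR hR1 (x + R * Complex.I) (by simpa using hx.1.le)
      (by simpa using hR.le) ?_
    · simpa using this
    · have := Complex.abs_im_le_norm (x + R * Complex.I)
      simp at this
      exact (le_abs_self R).trans this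

lemma gf_right (α β ω : ℝ) (h0 : 0 < α) (h2 : α < 2) (hβ : 0 < β) (hω : 0 < ω) :
    Tendsto (fun R : ℝ => ∫ y in (0 : ℝ)..R, gfF α β ω (R + y * Complex.I)) atTop (nhds 0) := by
  have hM : Tendsto (fun R : ℝ => (R ^ α - 1) ^ (-β)) atTop (nhds 0) :=
    (tendsto_rpow_neg_atTop hβ).comp (tendsto_atTop_add_const_right _ (-1) (tendsto_rpow_atTop h0))
  refine squeeze_zero_norm' (a := fun R : ℝ => (1 / ω) * (R ^ α - 1) ^ (-β)) ?_
    (by simpa using hM.const_mul (1 / ω))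
  filter_upwards [eventually_gt_atTop 0, (tendsto_rpow_atTop h0).eventually_gt_atTop 1]
    with R hR hR1
  have hpos : 0 ≤ (R ^ α - 1) ^ (-β) := Real.rpow_nonneg (by linarith) _
  have h1 := intervalIntegral.norm_integral_le_of_norm_le (a := 0) (b := R) (μ := MeasureTheory.volume)
    (f := fun y : ℝ => gfF α β ω (R + y * Complex.I))
    (g := fun y => Real.exp (-(ω * y)) * (R ^ α - 1) ^ (-β)) hR.le ?_
    (Continuous.intervalIntegrable (by fun_prop) _ _)
  · refine h1.trans ?_
    rw [intervalIntegral.integral_mul_const]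
    gcongr
    have hd : ∀ y ∈ Set.uIcc 0 R, HasDerivAt (fun y => -(1 / ω) * Real.exp (-(ω * y)))
        (Real.exp (-(ω * y))) y := by
      intro y _
      have := (((hasDerivAt_id y).const_mul ω).neg.exp).const_mul (-(1 / ω))
      refine this.congr_deriv ?_
      simp
      field_simp
    rw [intervalIntegral.integral_eq_sub_of_hasDerivAt hd
      (Continuous.intervalIntegrable (by fun_prop) _ _)]
    simp
    positivity
  · refine Eventually.of_forall fun y hy => ?_
    have := gf_norm α β ω h0 h2 hβ R hR hR1 (R + y * Complex.I) (by simpa using hR.le)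
      (by simpa using hy.1.le) ?_
    · simpa using this
    · have := Complex.abs_re_le_norm (R + y * Complex.I)
      simp at this
      exact (le_abs_self R).trans this

lemma gf_left (α β ω : ℝ) (h0 : 0 < α) (h2 : α < 2) (hβ : 0 < β) (hω : 0 < ω) :
    Tendsto (fun R : ℝ => ∫ y in (0 : ℝ)..R, gfF α β ω (y * Complex.I)) atTop
      (nhds (∫ y in Set.Ioi (0 : ℝ), gfF α β ω (y * Complex.I))) := by
  have hM : Tendsto (fun R : ℝ => (R ^ α - 1) ^ (-β)) atTop (nhds 0) :=
    (tendsto_rpow_neg_atTop hβ).comp (tendsto_atTop_add_const_right _ (-1) (tendsto_rpow_atTop h0))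
  refine MeasureTheory.intervalIntegral_tendsto_integral_Ioi 0 ?_ tendsto_id
  have hc : ContinuousOn (fun y : ℝ => gfF α β ω (y * Complex.I)) (Set.Ici 0) := by
    intro y hy
    refine ContinuousAt.continuousWithinAt ?_
    have := gf_cont α β ω h0 h2 (y * Complex.I) (by simp) (by simpa using hy)
    exact ContinuousAt.comp (f := fun y : ℝ => (y * Complex.I : ℂ)) this (by fun_prop)
  refine (MeasureTheory.integrable_norm_iff
    ((hc.mono Set.Ioi_subset_Ici_self).aestronglyMeasurable measurableSet_Ioi)).1 ?_
  refine integrable_of_isBigO_exp_neg hω hc.norm ?_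
  · refine Asymptotics.IsBigO.of_bound 1 ?_
    filter_upwards [eventually_gt_atTop 0, (tendsto_rpow_atTop h0).eventually_gt_atTop 1,
      hM.eventually_le_const one_pos] with y hy hy1 hy2
    have := gf_norm α β ω h0 h2 hβ y hy hy1 (y * Complex.I) (by simp)
      (by simpa using hy.le) (by simp [le_abs_self])
    rw [norm_norm]
    refine this.trans ?_
    simp only [Complex.mul_im, Complex.ofReal_re, Complex.I_im, mul_one, Complex.ofReal_im,
      Complex.I_re, mul_zero, add_zero, Real.norm_eq_abs, Real.abs_exp, one_mul, neg_mul]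
    exact mul_le_of_le_one_right (Real.exp_pos _).le hy2

lemma gf_imag (α β ω u : ℝ) (hu : 0 < u) : gfF α β ω (u * Complex.I) =
    Complex.exp (-(ω * u : ℝ)) *
            (1 + Complex.exp ((Real.pi : ℂ) * (α : ℂ) / 2 * Complex.I) * (u : ℂ) ^ (α : ℂ))
              ^ (-(β : ℂ)) := by
  unfold gfF
  have e1 : (ω : ℂ) * (u * Complex.I) * Complex.I = (-(ω * u : ℝ)) := by
    push_cast
    linear_combination (ω * u : ℂ) * Complex.I_mul_I
  have e2 : (u * Complex.I : ℂ) ^ (α : ℂ) =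
      Complex.exp ((Real.pi : ℂ) * (α : ℂ) / 2 * Complex.I) * (u : ℂ) ^ (α : ℂ) := by
    have hne : (u : ℂ) ≠ 0 := by exact_mod_cast hu.ne'
    rw [Complex.cpow_def_of_ne_zero (mul_ne_zero hne Complex.I_ne_zero),
      Complex.cpow_def_of_ne_zero hne, Complex.log_ofReal_mul hu Complex.I_ne_zero,
      Complex.log_I, ← Complex.exp_add, Complex.ofReal_log hu.le]
    congr 1
    ring
  rw [e1, e2]

lemma gf_real (α β ω x : ℝ) (hx : 0 ≤ x) : (gfF α β ω x).re =
    Real.cos (ω * x) * (1 + x ^ α) ^ (-β) := by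
  unfold gfF
  have hp : 0 ≤ x ^ α := Real.rpow_nonneg hx α
  have : (1 + (x : ℂ) ^ (α : ℂ)) ^ (-(β : ℂ)) = (((1 + x ^ α) ^ (-β) : ℝ) : ℂ) := by
    rw [Complex.ofReal_cpow (by linarith)]
    push_cast
    rw [Complex.ofReal_cpow hx]
  rw [this, Complex.re_mul_ofReal]
  congr 1
  rw [← Complex.ofReal_mul, Complex.exp_ofReal_mul_I_re]

/-- Contour-rotation identity for the spectral density of the one-dimensional GFGCC:
for `α ∈ (0,2)`, `β > 0` and `ω > 0`, the improper integral
`lim_{R→∞} ∫₀^R cos(ωt)(1+t^α)^{−β} dt` exists and equals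
`−Im ∫₀^∞ e^{−ωu}(1 + e^{iπα/2}u^α)^{−β} du` (principal branch). -/
theorem gfgcc_spectral_contour_rotation (α β ω : ℝ)
    (hα : α ∈ Set.Ioo (0 : ℝ) 2) (hβ : 0 < β) (hω : 0 < ω) :
    Tendsto (fun R : ℝ => ∫ t in (0 : ℝ)..R, Real.cos (ω * t) * (1 + t ^ α) ^ (-β)) atTop
      (nhds (-(∫ u in Set.Ioi (0 : ℝ),
          Complex.exp (-(ω * u : ℝ)) *
            (1 + Complex.exp ((Real.pi : ℂ) * (α : ℂ) / 2 * Complex.I) * (u : ℂ) ^ (α : ℂ))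
              ^ (-(β : ℂ))).im)) := by
  obtain ⟨h0, h2⟩ := hα
  have hJ := MeasureTheory.setIntegral_congr_fun (μ := MeasureTheory.volume)
    (measurableSet_Ioi (a := (0 : ℝ))) (fun u hu => gf_imag α β ω u hu)
  rw [← hJ]
  have hlim := ((gf_top α β ω h0 h2 hβ hω).sub
    ((gf_right α β ω h0 h2 hβ hω).const_mul Complex.I)).add
    ((gf_left α β ω h0 h2 hβ hω).const_mul Complex.I)
  have hre := (Complex.continuous_re.tendsto _).comp hlim
  simp only [mul_zero, sub_zero, zero_add, Complex.I_mul_re] at hre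
  refine hre.congr' ?_
  filter_upwards [eventually_gt_atTop 0] with R hR
  have hint : IntervalIntegrable (fun x : ℝ => gfF α β ω x) MeasureTheory.volume 0 R := by
    refine ContinuousOn.intervalIntegrable fun x hx => ContinuousAt.continuousWithinAt ?_
    rw [Set.uIcc_of_le hR.le] at hx
    have := gf_cont α β ω h0 h2 x (by simpa using hx.1) (by simp)
    exact ContinuousAt.comp (f := fun y : ℝ => (y : ℂ)) this (by fun_prop)
  simp only [Function.comp]
  rw [← gf_rect α β ω h0 h2 R hR]
  have := Complex.reCLM.intervalIntegral_comp_comm hint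
  simp only [Complex.reCLM_apply] at this
  rw [← this]
  refine intervalIntegral.integral_congr fun x hx => ?_
  rw [Set.uIcc_of_le hR.le] at hx
  exact gf_real α β ω x hx.1
end

section
/- Let α ∈ (0,2), β > 0 and a > 0. Then −(2/π) Im ∫₀^∞ u (1 + e^{iπα/2} u^α)^{−β} (u² + a²)^{−1} du = (1 + a^α)^{−β}, where (1 + e^{iπα/2} u^α)^{−β} denotes the principal branch of the complex power. (This residue identity verifies that the Laplace-type integral formula is indeed the spectral density of GFGCC: it recovers the generalized Cauchy covariance as the inverse Fourier transform of the claimed spectral density.) -/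
open Complex Filter Topology MeasureTheory Set

noncomputable def rsF (α β : ℝ) (s : ℂ) : ℂ := (1 + cexp (α * s)) ^ (-(β : ℂ))

noncomputable def rsH (α β c : ℝ) (s : ℂ) : ℂ :=
  dslope (rsF α β) c s * cexp (2 * s) / dslope (fun z : ℂ => cexp (2 * z)) c s

lemma rs_slit {t : ℝ} (r : ℝ) (h0 : 0 ≤ t) (h1 : t < Real.pi) :
    1 + cexp ((r : ℂ) + t * I) ∈ slitPlane := by
  rw [mem_slitPlane_iff]
  have hre : (cexp ((r : ℂ) + t * I)).re = Real.exp r * Real.cos t := by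
    rw [Complex.exp_re]; simp
  have him : (cexp ((r : ℂ) + t * I)).im = Real.exp r * Real.sin t := by
    rw [Complex.exp_im]; simp
  rcases h0.eq_or_lt with h | h
  · left
    rw [add_re, hre, ← h]; simp; positivity
  · right
    rw [add_im, him]
    have := Real.sin_pos_of_pos_of_lt_pi h h1
    simp only [one_im, zero_add]
    positivity

lemma rs_slit' {α : ℝ} (hα : α ∈ Set.Ioo (0 : ℝ) 2) {s : ℂ} (h0 : 0 ≤ s.im)
    (h1 : s.im ≤ Real.pi / 2) : 1 + cexp (α * s) ∈ slitPlane := by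
  have : (α : ℂ) * s = ((α * s.re : ℝ) : ℂ) + ((α * s.im : ℝ) : ℂ) * I := by
    conv_lhs => rw [← re_add_im s]
    push_cast; ring
  rw [this]
  refine rs_slit _ (mul_nonneg hα.1.le h0) ?_
  have := Real.pi_pos
  nlinarith [hα.1, hα.2]

lemma rsF_diff {α β : ℝ} (hα : α ∈ Set.Ioo (0 : ℝ) 2) {s : ℂ} (h0 : 0 ≤ s.im)
    (h1 : s.im ≤ Real.pi / 2) : DifferentiableAt ℂ (rsF α β) s := by
  unfold rsF
  exact DifferentiableAt.cpow_const (by fun_prop) (rs_slit' hα h0 h1)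

lemma rs_exp_ne {c : ℝ} {s : ℂ} (h0 : 0 ≤ s.im)
    (h1 : s.im ≤ Real.pi / 2) (hs : s ≠ c) : cexp (2 * s) ≠ cexp (2 * c) := by
  intro h
  rw [exp_eq_exp_iff_exists_int] at h
  obtain ⟨n, hn⟩ := h
  have him : s.im = n * Real.pi := by
    have := congrArg Complex.im hn
    simp at this
    linarith
  have hp := Real.pi_pos
  have hn0 : n = 0 := by
    have a1 : (-1 : ℝ) < n := by by_contra! hh; nlinarith
    have a2 : (n : ℝ) < 1 := by by_contra! hh; nlinarith
    have a1' : (-1 : ℤ) < n := by exact_mod_cast a1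
    have a2' : n < (1 : ℤ) := by exact_mod_cast a2
    omega
  apply hs
  rw [hn0] at hn
  simpa using hn

lemma rsH_eq (α β : ℝ) {c : ℝ} {s : ℂ} (hs : s ≠ c) :
    rsH α β c s = (rsF α β s - rsF α β c) * (cexp (2 * s) / (cexp (2 * s) - cexp (2 * c))) := by
  unfold rsH
  rw [dslope_of_ne _ hs, dslope_of_ne _ hs, slope_def_field, slope_def_field]
  have : s - c ≠ 0 := sub_ne_zero.2 hs
  by_cases h : cexp (2 * s) - cexp (2 * c) = 0
  · rw [h]; simp
  · field_simp

lemma rs_dslope_ne {c : ℝ} {s : ℂ} (h0 : 0 ≤ s.im) (h1 : s.im ≤ Real.pi / 2) :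
    dslope (fun z : ℂ => cexp (2 * z)) c s ≠ 0 := by
  by_cases hs : s = c
  · have hd : HasDerivAt (fun z : ℂ => cexp (2 * z)) (cexp (2 * c) * (2 * 1)) c :=
      ((hasDerivAt_id (c : ℂ)).const_mul 2).cexp
    rw [hs, dslope_same, hd.deriv]
    simp [Complex.exp_ne_zero]
  · rw [dslope_of_ne _ hs, slope_def_field]
    exact div_ne_zero (sub_ne_zero.2 (rs_exp_ne h0 h1 hs)) (sub_ne_zero.2 hs)

lemma rsH_diff {α β c : ℝ} (hα : α ∈ Set.Ioo (0 : ℝ) 2) {s : ℂ} (h0 : 0 ≤ s.im)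
    (h1 : s.im ≤ Real.pi / 2) (hs : s ≠ c) : DifferentiableAt ℂ (rsH α β c) s := by
  unfold rsH
  refine DifferentiableAt.div (DifferentiableAt.mul ?_ (by fun_prop)) ?_ (rs_dslope_ne h0 h1)
  · exact (differentiableAt_dslope_of_ne hs).2 (rsF_diff hα h0 h1)
  · exact (differentiableAt_dslope_of_ne hs).2 (by fun_prop)

lemma rsH_cont {α β c : ℝ} (hα : α ∈ Set.Ioo (0 : ℝ) 2) {s : ℂ} (h0 : 0 ≤ s.im)
    (h1 : s.im ≤ Real.pi / 2) : ContinuousAt (rsH α β c) s := by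
  by_cases hs : s = c
  · unfold rsH
    refine ContinuousAt.div (ContinuousAt.mul ?_ (by fun_prop)) ?_ (rs_dslope_ne h0 h1)
    · have hd := rsF_diff (β := β) hα h0 h1
      rw [hs] at hd ⊢
      exact continuousAt_dslope_same.2 hd
    · rw [hs]; exact continuousAt_dslope_same.2 (by fun_prop)
  · exact (rsH_diff hα h0 h1 hs).continuousAt

lemma rs_tendsto_mul_top {α : ℝ} (hα : 0 < α) :
    Tendsto (fun s : ℂ => (α : ℂ) * s) (comap re atTop) (comap re atTop) := by
  rw [tendsto_comap_iff]
  have : (re ∘ fun s : ℂ => (α : ℂ) * s) = fun s => α * s.re := by ext; simp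
  rw [this]
  exact tendsto_comap.const_mul_atTop hα

lemma rs_tendsto_mul_bot {α : ℝ} (hα : 0 < α) :
    Tendsto (fun s : ℂ => (α : ℂ) * s) (comap re atBot) (comap re atBot) := by
  rw [tendsto_comap_iff]
  have : (re ∘ fun s : ℂ => (α : ℂ) * s) = fun s => α * s.re := by ext; simp
  rw [this]
  exact tendsto_comap.const_mul_atBot hα

lemma rs_add_cob (k : ℂ) {f : ℂ → ℂ} {l : Filter ℂ} (h : Tendsto f l (Bornology.cobounded ℂ)) :
    Tendsto (fun s => k + f s) l (Bornology.cobounded ℂ) := by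
  rw [← tendsto_norm_atTop_iff_cobounded] at h ⊢
  refine tendsto_atTop_mono (fun s => ?_) (tendsto_atTop_add_const_right l (-‖k‖) h)
  have := norm_sub_le (k + f s) k
  simp only [add_sub_cancel_left] at this
  linarith

lemma rsF_top {α β : ℝ} (hα : 0 < α) (hβ : 0 < β) :
    Tendsto (rsF α β) (comap re atTop) (𝓝 0) := by
  rw [tendsto_zero_iff_norm_tendsto_zero]
  have h1 : Tendsto (fun s : ℂ => ‖1 + cexp (α * s)‖) (comap re atTop) atTop := by
    rw [tendsto_norm_atTop_iff_cobounded]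
    exact rs_add_cob 1 (tendsto_exp_comap_re_atTop.comp (rs_tendsto_mul_top hα))
  refine ((tendsto_rpow_neg_atTop hβ).comp h1).congr fun s => ?_
  unfold rsF
  rw [← ofReal_neg, norm_cpow_real]; rfl

lemma rsF_bot {α β : ℝ} (hα : 0 < α) :
    Tendsto (rsF α β) (comap re atBot) (𝓝 1) := by
  have h1 : Tendsto (fun s : ℂ => 1 + cexp (α * s)) (comap re atBot) (𝓝 (1 + 0)) :=
    (tendsto_exp_comap_re_atBot.comp (rs_tendsto_mul_bot hα)).const_add 1
  have h2 : ContinuousAt (fun z : ℂ => z ^ (-(β : ℂ))) (1 + 0) :=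
    continuousAt_cpow_const (by simp)
  have h3 := h2.tendsto.comp h1
  simp only [add_zero, one_cpow] at h3
  exact h3

lemma rsH_top {α β c : ℝ} (hα : 0 < α) (hβ : 0 < β) :
    Tendsto (rsH α β c) (comap re atTop) (𝓝 (-rsF α β c)) := by
  have hw : Tendsto (fun s : ℂ => cexp (2 * s)) (comap re atTop) (Bornology.cobounded ℂ) := by
    have := tendsto_exp_comap_re_atTop.comp (rs_tendsto_mul_top (α := 2) (by norm_num))
    simpa [Function.comp_def] using this
  have hw1 : Tendsto (fun s : ℂ => cexp (2 * s) - cexp (2 * c)) (comap re atTop)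
      (Bornology.cobounded ℂ) := by
    have := rs_add_cob (-cexp (2 * c)) hw
    refine this.congr fun s => by ring
  have hq : Tendsto (fun s : ℂ => 1 + cexp (2 * c) * (cexp (2 * s) - cexp (2 * c))⁻¹)
      (comap re atTop) (𝓝 (1 + cexp (2 * c) * 0)) :=
    ((tendsto_inv₀_cobounded.comp hw1).const_mul _).const_add 1
  have := ((rsF_top hα hβ).sub_const (rsF α β c)).mul hq
  simp only [mul_zero, add_zero, mul_one, zero_sub] at this
  refine this.congr' ?_
  have e1 : ∀ᶠ s : ℂ in comap re atTop, c < s.re := tendsto_comap.eventually_gt_atTop c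
  have e2 := hw1.eventually_ne_cobounded 0
  filter_upwards [e1, e2] with s hs hs2
  rw [rsH_eq]
  · congr 1; field_simp; ring
  · rintro rfl; simp at hs

lemma rsH_bot {α β c : ℝ} (hα : 0 < α) :
    Tendsto (rsH α β c) (comap re atBot) (𝓝 0) := by
  have hw : Tendsto (fun s : ℂ => cexp (2 * s)) (comap re atBot) (𝓝 0) := by
    have := tendsto_exp_comap_re_atBot.comp (rs_tendsto_mul_bot (α := 2) (by norm_num))
    simpa [Function.comp_def] using this
  have := ((rsF_bot (β := β) hα).sub_const (rsF α β c)).mul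
    (hw.div (hw.sub_const (cexp (2 * c))) (by simp [Complex.exp_ne_zero]))
  simp only [zero_div, mul_zero] at this
  refine this.congr' ?_
  have e1 : ∀ᶠ s : ℂ in comap re atBot, s.re < c := tendsto_comap.eventually_lt_atBot c
  filter_upwards [e1] with s hs
  rw [rsH_eq]
  · rfl
  · rintro rfl; simp at hs

lemma rs_side {H : ℂ → ℂ} {L : ℂ} {l : Filter ℝ} [l.IsCountablyGenerated] {b : ℝ}
    (hb : 0 ≤ b)
    (hH : ∀ s : ℂ, 0 ≤ s.im → s.im ≤ b → ContinuousAt H s)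
    {k : ℝ → ℝ} {m : Filter ℝ} (hk : Tendsto k l m)
    (h : Tendsto H (comap re m) (𝓝 L)) :
    Tendsto (fun R : ℝ => ∫ y : ℝ in (0 : ℝ)..b, H (k R + y * I)) l (𝓝 (b * L)) := by
  have key : ∫ y : ℝ in (0 : ℝ)..b, L = b * L := by simp
  rw [← key]
  have hkk : ∀ y : ℝ, Tendsto (fun R => (k R : ℂ) + y * I) l (comap re m) := by
    intro y
    rw [tendsto_comap_iff]
    refine hk.congr fun R => by simp
  refine intervalIntegral.tendsto_integral_filter_of_dominated_convergence
    (fun _ => ‖L‖ + 1) ?_ ?_ (by simp) ?_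
  · refine Eventually.of_forall fun R => ?_
    refine ContinuousOn.aestronglyMeasurable ?_ measurableSet_uIoc
    intro y hy
    rw [uIoc_of_le hb] at hy
    have h1 : ContinuousAt H ((k R : ℂ) + y * I) := hH _ (by simpa using hy.1.le) (by simpa using hy.2)
    exact (ContinuousAt.comp (f := fun y : ℝ => (k R : ℂ) + y * I) h1 (by fun_prop)).continuousWithinAt
  · have h1 : ∀ᶠ s in comap re m, ‖H s‖ ≤ ‖L‖ + 1 :=
      (h.norm.eventually (gt_mem_nhds (lt_add_one ‖L‖))).mono fun s hs => hs.le
    rw [eventually_comap] at h1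
    filter_upwards [hk.eventually h1] with R hR
    exact Eventually.of_forall fun y _ => hR _ (by simp)
  · exact Eventually.of_forall fun y _ => h.comp (hkk y)

noncomputable def rsG (α β a : ℝ) (u : ℝ) : ℂ :=
  (u : ℂ) * (1 + Complex.exp ((Real.pi : ℂ) * (α : ℂ) / 2 * Complex.I)
            * (u : ℂ) ^ (α : ℂ)) ^ (-(β : ℂ)) / ((u : ℂ) ^ 2 + (a : ℂ) ^ 2)

lemma rs_exp_top (α x : ℝ) : cexp (α * (x + (Real.pi / 2 : ℝ) * I)) =
    Complex.exp ((Real.pi : ℂ) * (α : ℂ) / 2 * Complex.I) * ((Real.exp x : ℝ) : ℂ) ^ (α : ℂ) := by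
  rw [← ofReal_cpow (Real.exp_pos x).le, ← Real.exp_mul, ofReal_exp, ← Complex.exp_add]
  congr 1; push_cast; ring

lemma rs_slit_u {α : ℝ} (hα : α ∈ Set.Ioo (0 : ℝ) 2) {u : ℝ} (hu : 0 ≤ u) :
    1 + Complex.exp ((Real.pi : ℂ) * (α : ℂ) / 2 * Complex.I) * (u : ℂ) ^ (α : ℂ) ∈ slitPlane := by
  rcases hu.eq_or_lt with h | h
  · rw [← h]
    have : (α : ℂ) ≠ 0 := by exact_mod_cast hα.1.ne'
    simp [this]
  · have := rs_exp_top α (Real.log u)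
    rw [Real.exp_log h] at this
    rw [← this]
    have hp := Real.pi_pos
    exact rs_slit' hα (by simp; positivity) (by simp)

lemma rs_den_ne {a : ℝ} (ha : 0 < a) (u : ℝ) : (u : ℂ) ^ 2 + (a : ℂ) ^ 2 ≠ 0 := by
  have : u ^ 2 + a ^ 2 ≠ 0 := by positivity
  exact_mod_cast this

lemma rsG_cont {α β a : ℝ} (hα : α ∈ Set.Ioo (0 : ℝ) 2) (ha : 0 < a) :
    ContinuousOn (rsG α β a) (Ici 0) := by
  unfold rsG
  refine ContinuousOn.div (ContinuousOn.mul (by fun_prop) ?_) (by fun_prop)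
    (fun u _ => rs_den_ne ha u)
  refine ContinuousOn.cpow_const ?_ (fun u hu => rs_slit_u hα hu)
  have : Continuous fun u : ℝ => (u : ℂ) ^ (α : ℂ) :=
    continuous_ofReal_cpow_const (by simpa using hα.1)
  exact (continuous_const.add (continuous_const.mul this)).continuousOn

lemma rsG_bigO {α β a : ℝ} (hα : 0 < α) (hβ : 0 < β) (ha : 0 < a) :
    rsG α β a =O[atTop] fun u : ℝ => u ^ (-(α * β) - 1) := by
  refine Asymptotics.IsBigO.of_bound (2 ^ β) ?_
  have e : ∀ᶠ u : ℝ in atTop, 2 ≤ u ^ α := (tendsto_rpow_atTop hα).eventually_ge_atTop 2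
  filter_upwards [e, eventually_gt_atTop 0] with u h2 hu
  have hnum : u ^ α / 2 ≤ ‖1 + Complex.exp ((Real.pi : ℂ) * (α : ℂ) / 2 * Complex.I)
            * (u : ℂ) ^ (α : ℂ)‖ := by
    have hn : ‖Complex.exp ((Real.pi : ℂ) * (α : ℂ) / 2 * Complex.I) * (u : ℂ) ^ (α : ℂ)‖
        = u ^ α := by
      rw [norm_mul, norm_cpow_real, norm_real, Real.norm_of_nonneg hu.le]
      have : (Real.pi : ℂ) * (α : ℂ) / 2 * Complex.I = ((Real.pi * α / 2 : ℝ) : ℂ) * I := by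
        push_cast; ring
      rw [this, norm_exp_ofReal_mul_I, one_mul]
    have := norm_sub_le (1 + Complex.exp ((Real.pi : ℂ) * (α : ℂ) / 2 * Complex.I)
            * (u : ℂ) ^ (α : ℂ)) 1
    rw [add_sub_cancel_left, hn, norm_one] at this
    linarith
  have hp : ‖(1 + Complex.exp ((Real.pi : ℂ) * (α : ℂ) / 2 * Complex.I)
            * (u : ℂ) ^ (α : ℂ)) ^ (-(β : ℂ))‖ ≤ 2 ^ β * u ^ (-(α * β)) := by
    rw [← ofReal_neg, norm_cpow_real]
    refine (Real.rpow_le_rpow_of_nonpos (by positivity) hnum (by linarith)).trans (le_of_eq ?_)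
    rw [Real.div_rpow (by positivity) (by norm_num), ← Real.rpow_mul hu.le, Real.rpow_neg (by norm_num : (0:ℝ) ≤ 2),
      mul_neg, div_inv_eq_mul, mul_comm]
  have hd : ‖(u : ℂ) ^ 2 + (a : ℂ) ^ 2‖ = u ^ 2 + a ^ 2 := by
    rw [← ofReal_pow, ← ofReal_pow, ← ofReal_add, norm_real, Real.norm_of_nonneg (by positivity)]
  unfold rsG
  rw [norm_div, norm_mul, hd, norm_real, Real.norm_of_nonneg hu.le,
    Real.norm_of_nonneg (by positivity), Real.rpow_sub_one hu.ne', div_le_iff₀ (by positivity)]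
  calc _ ≤ u * (2 ^ β * u ^ (-(α * β))) := by gcongr
    _ = 2 ^ β * (u ^ (-(α * β)) / u) * u ^ 2 := by field_simp
    _ ≤ _ := by gcongr; nlinarith

lemma rsG_int {α β a : ℝ} (hα : α ∈ Set.Ioo (0 : ℝ) 2) (hβ : 0 < β) (ha : 0 < a) :
    IntegrableOn (rsG α β a) (Ioi 0) := by
  refine IntegrableOn.mono_set ?_ Ioi_subset_Ici_self
  refine ((rsG_cont hα ha).locallyIntegrableOn measurableSet_Ici).integrableOn_of_isBigO_atTop
    (rsG_bigO hα.1 hβ ha) ?_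
  rw [integrableAtFilter_rpow_atTop_iff]
  nlinarith [mul_pos hα.1 hβ]

lemma rsH_top_im {α β a : ℝ} (ha : 0 < a) (x : ℝ) :
    (rsH α β (Real.log a) (x + (Real.pi / 2 : ℝ) * I)).im = Real.exp x * (rsG α β a (Real.exp x)).im
      - (rsF α β (Real.log a)).im * (Real.exp x ^ 2 / (Real.exp x ^ 2 + a ^ 2)) := by
  have hne : (x : ℂ) + (Real.pi / 2 : ℝ) * I ≠ (Real.log a : ℝ) := by
    intro h
    have := congrArg Complex.im h
    simp [Real.pi_ne_zero] at this
  rw [rsH_eq _ _ hne]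
  have e1 : cexp (2 * (x + (Real.pi / 2 : ℝ) * I)) = -((Real.exp x : ℝ) : ℂ) ^ 2 := by
    have : (2 : ℂ) * (x + (Real.pi / 2 : ℝ) * I) = x + x + Real.pi * I := by push_cast; ring
    rw [this, Complex.exp_add, Complex.exp_pi_mul_I, Complex.exp_add, ofReal_exp]; ring
  have e2 : cexp (2 * (Real.log a : ℝ)) = (a : ℂ) ^ 2 := by
    rw [two_mul, Complex.exp_add, ← ofReal_exp, Real.exp_log ha]; ring
  have e3 : -((Real.exp x : ℝ) : ℂ) ^ 2 / (-((Real.exp x : ℝ) : ℂ) ^ 2 - (a : ℂ) ^ 2)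
      = ((Real.exp x ^ 2 / (Real.exp x ^ 2 + a ^ 2) : ℝ) : ℂ) := by
    rw [← neg_add', neg_div_neg_eq]; push_cast; rfl
  have e4 : rsG α β a (Real.exp x) = rsF α β (x + (Real.pi / 2 : ℝ) * I)
      * ((Real.exp x / (Real.exp x ^ 2 + a ^ 2) : ℝ) : ℂ) := by
    unfold rsG rsF
    rw [rs_exp_top]; push_cast; ring
  rw [e1, e2, e3, e4, im_mul_ofReal, im_mul_ofReal, sub_im]
  ring

lemma rsF_real (α β x : ℝ) : rsF α β x = (((1 + Real.exp (α * x)) ^ (-β) : ℝ) : ℂ) := by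
  unfold rsF
  rw [ofReal_cpow (by positivity)]
  push_cast; rfl

lemma rsH_bottom_im {α β c x : ℝ} (hx : x ≠ c) : (rsH α β c x).im = 0 := by
  rw [rsH_eq _ _ (by exact_mod_cast hx), rsF_real, rsF_real]
  have : ∀ y : ℝ, cexp (2 * y) = ((Real.exp (2 * y) : ℝ) : ℂ) := fun y => by push_cast; rfl
  rw [this, this]
  norm_cast

lemma rs_line {α β c t : ℝ} (hα : α ∈ Set.Ioo (0 : ℝ) 2) (h0 : 0 ≤ t) (h1 : t ≤ Real.pi / 2) :
    Continuous fun x : ℝ => rsH α β c (x + t * I) := by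
  rw [continuous_iff_continuousAt]
  intro x
  have : ContinuousAt (rsH α β c) (x + t * I) := rsH_cont hα (by simpa using h0) (by simpa using h1)
  exact ContinuousAt.comp (f := fun x : ℝ => (x : ℂ) + t * I) this (by fun_prop)

lemma rs_line' {α β c R : ℝ} (hα : α ∈ Set.Ioo (0 : ℝ) 2) :
    ∫ x in (-R)..R, (rsH α β c (x + (Real.pi / 2 : ℝ) * I)).im =
    (∫ y in (0 : ℝ)..(Real.pi / 2), rsH α β c ((R : ℝ) + y * I)).re -
    (∫ y in (0 : ℝ)..(Real.pi / 2), rsH α β c ((-R : ℝ) + y * I)).re := by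
  have hp := Real.pi_pos
  have hr := integral_boundary_rect_eq_zero_of_differentiable_on_off_countable (rsH α β c)
    ⟨-R, 0⟩ ⟨R, Real.pi / 2⟩ {(c : ℂ)} (countable_singleton _) ?_ ?_
  · have him := congrArg Complex.im hr
    simp only [sub_im, add_im, smul_eq_mul, I_mul_im, zero_im] at him
    have t1 : (∫ x in (-R)..R, rsH α β c (x + (0 : ℝ) * I)).im = 0 := by
      rw [← imCLM_apply, ← ContinuousLinearMap.intervalIntegral_comp_comm _
        ((rs_line hα le_rfl (by positivity)).intervalIntegrable _ _)]
      rw [← intervalIntegral.integral_zero (μ := volume) (a := -R) (b := R)]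
      refine intervalIntegral.integral_congr_ae ?_
      have : ∀ᵐ x : ℝ, x ≠ c := by simp [ae_iff]
      filter_upwards [this] with x hx _
      simpa using rsH_bottom_im hx
    have t2 : (∫ x in (-R)..R, rsH α β c (x + (Real.pi / 2 : ℝ) * I)).im =
        ∫ x in (-R)..R, (rsH α β c (x + (Real.pi / 2 : ℝ) * I)).im := by
      rw [← imCLM_apply, ← ContinuousLinearMap.intervalIntegral_comp_comm _
        ((rs_line hα (by positivity) le_rfl).intervalIntegrable _ _)]
      rfl
    linarith
  · intro s hs
    have h2 := hs.2
    simp only [mem_preimage] at h2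
    rw [uIcc_of_le (by positivity)] at h2
    exact (rsH_cont hα h2.1 h2.2).continuousWithinAt
  · rintro s ⟨⟨_, hs⟩, hsc⟩
    simp only [mem_preimage] at hs
    rw [min_eq_left (by positivity), max_eq_right (by positivity)] at hs
    exact rsH_diff hα hs.1.le hs.2.le hsc

/-- Residue identity recovering the generalized Cauchy covariance from the claimed spectral
density: for `α ∈ (0,2)`, `β > 0` and `a > 0`,
`−(2/π) Im ∫₀^∞ u(1 + e^{iπα/2}u^α)^{−β}(u² + a²)^{−1} du = (1 + a^α)^{−β}`. -/
theorem gfgcc_spectral_residue_identity (α β a : ℝ)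
    (hα : α ∈ Set.Ioo (0 : ℝ) 2) (hβ : 0 < β) (ha : 0 < a) :
    -(2 / Real.pi) * (∫ u in Set.Ioi (0 : ℝ),
        (u : ℂ) * (1 + Complex.exp ((Real.pi : ℂ) * (α : ℂ) / 2 * Complex.I)
            * (u : ℂ) ^ (α : ℂ)) ^ (-(β : ℂ)) / ((u : ℂ) ^ 2 + (a : ℂ) ^ 2)).im
      = (1 + a ^ α) ^ (-β) := by
  have hp := Real.pi_pos
  change -(2 / Real.pi) * (∫ u in Set.Ioi (0 : ℝ), rsG α β a u).im = _
  have hF : rsF α β (Real.log a) = (((1 + a ^ α) ^ (-β) : ℝ) : ℂ) := by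
    rw [rsF_real, mul_comm, Real.exp_mul, Real.exp_log ha]
  have hG := rsG_int hα hβ ha
  have hGi : IntegrableOn (fun u => (rsG α β a u).im) (Ioi 0) := hG.im
  have himg : Real.exp '' univ = Ioi 0 := by rw [image_univ, Real.range_exp]
  have hder : ∀ x ∈ (univ : Set ℝ), HasDerivWithinAt Real.exp (Real.exp x) univ x :=
    fun x _ => (Real.hasDerivAt_exp x).hasDerivWithinAt
  have s1 := integral_image_eq_integral_abs_deriv_smul MeasurableSet.univ hder
    Real.exp_injective.injOn (fun u => (rsG α β a u).im)
  have s2 := integrableOn_image_iff_integrableOn_abs_deriv_smul MeasurableSet.univ hder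
    Real.exp_injective.injOn (fun u => (rsG α β a u).im)
  rw [himg] at s1 s2
  have s3 := s2.1 hGi
  simp only [Real.abs_exp, smul_eq_mul, Measure.restrict_univ, integrableOn_univ] at s1 s3
  have hIm : (∫ u in Set.Ioi (0 : ℝ), rsG α β a u).im = ∫ u in Set.Ioi (0 : ℝ), (rsG α β a u).im := by
    rw [← imCLM_apply, ← ContinuousLinearMap.integral_comp_comm _ hG]; rfl
  have l1 := intervalIntegral_tendsto_integral s3 tendsto_neg_atTop_atBot tendsto_id
  have hcont : ∀ s : ℂ, 0 ≤ s.im → s.im ≤ Real.pi / 2 →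
    ContinuousAt (rsH α β (Real.log a)) s := fun s h0 h1 => rsH_cont hα h0 h1
  have r1 := rs_side (l := atTop) (k := fun R => R) (by positivity) hcont tendsto_id (rsH_top hα.1 hβ)
  have r2 := rs_side (l := atTop) (k := fun R => -R) (by positivity) hcont tendsto_neg_atTop_atBot
    (rsH_bot hα.1)
  have l2 := ((continuous_re.tendsto _).comp r1).sub ((continuous_re.tendsto _).comp r2)
  have hl : (fun R : ℝ => ∫ x in (-R)..R, Real.exp x * (rsG α β a (Real.exp x)).im) =
      fun R : ℝ => (∫ y in (0 : ℝ)..(Real.pi / 2), rsH α β (Real.log a) ((R : ℝ) + y * I)).re -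
        (∫ y in (0 : ℝ)..(Real.pi / 2), rsH α β (Real.log a) ((-R : ℝ) + y * I)).re := by
    ext R
    rw [← rs_line' hα]
    refine intervalIntegral.integral_congr fun x _ => ?_
    simp only [rsH_top_im ha, hF, ofReal_im, zero_mul, sub_zero]
  have l3 : Tendsto (fun R : ℝ => ∫ x in (-R)..R, Real.exp x * (rsG α β a (Real.exp x)).im) atTop _ := l1
  rw [hl] at l3
  have := tendsto_nhds_unique l3 l2
  rw [hIm, s1, this, hF, mul_zero, re_ofReal_mul, ← ofReal_neg, ofReal_re, zero_re]
  field_simp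
  ring
end

section
/- Let n ≥ 1, α ∈ (0,2]ⁿ, β ∈ (0,∞)ⁿ, and fix u, v ∈ ℝⁿ. For ε ∈ ℝ₊ⁿ, the total-increment covariance of the GSGCC factorizes: Σ_{δ∈{0,1}ⁿ} Σ_{η∈{0,1}ⁿ} (−1)^{Σᵢδᵢ + Σᵢηᵢ} C^#_{α,β}( Σᵢ εᵢ(δᵢuᵢ − ηᵢvᵢ)eᵢ ) = Πᵢ [ 1 − (1+|εᵢuᵢ|^{αᵢ})^{−βᵢ} − (1+|εᵢvᵢ|^{αᵢ})^{−βᵢ} + (1+|εᵢ(uᵢ−vᵢ)|^{αᵢ})^{−βᵢ} ], and as ε → 0 in ℝ₊ⁿ (each εᵢ → 0⁺), ( Πᵢ εᵢ^{αᵢ} )^{−1} times this quantity converges to Πᵢ βᵢ( |uᵢ|^{αᵢ} + |vᵢ|^{αᵢ} − |uᵢ−vᵢ|^{αᵢ} ). (Up to the factor Πᵢ 2βᵢ this is the covariance of the fractional Brownian sheet of index α/2, identifying the local multi-self-similar limit of the GSGCC.) -/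
open Filter Finset

theorem aux_fact (n : ℕ) (F : Fin n → Bool → Bool → ℝ) :
    (∑ δ : Fin n → Bool, ∑ η : Fin n → Bool,
      (-1 : ℝ) ^ ((∑ i, (if δ i then 1 else 0)) + ∑ i, (if η i then 1 else 0) : ℕ) *
        ∏ i, F i (δ i) (η i))
      = ∏ i, (F i false false - F i true false - F i false true + F i true true) := by
  have key : ∀ g : Fin n → Bool → ℝ, ∑ x : Fin n → Bool, ∏ i, g i (x i) = ∏ i, ∑ b, g i b := by
    intro g
    rw [Finset.prod_univ_sum, Fintype.piFinset_univ]
  have h : ∀ δ η : Fin n → Bool,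
      (-1 : ℝ) ^ ((∑ i, (if δ i then 1 else 0)) + ∑ i, (if η i then 1 else 0) : ℕ) *
        ∏ i, F i (δ i) (η i) =
      ∏ i, ((-1 : ℝ) ^ (if δ i then 1 else 0 : ℕ) * (-1 : ℝ) ^ (if η i then 1 else 0 : ℕ)
        * F i (δ i) (η i)) := by
    intro δ η
    rw [Finset.prod_mul_distrib, Finset.prod_mul_distrib, pow_add,
      Finset.prod_pow_eq_pow_sum, Finset.prod_pow_eq_pow_sum]
  simp_rw [h]
  have h2 : ∀ δ : Fin n → Bool, _ := fun δ => key (fun i b =>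
    (-1 : ℝ) ^ (if δ i then 1 else 0 : ℕ) * (-1 : ℝ) ^ (if b then 1 else 0 : ℕ) * F i (δ i) b)
  simp_rw [h2]
  have h3 := key (fun i a => ∑ b : Bool,
    (-1 : ℝ) ^ (if a then 1 else 0 : ℕ) * (-1 : ℝ) ^ (if b then 1 else 0 : ℕ) * F i a b)
  rw [h3]
  refine Finset.prod_congr rfl fun i _ => ?_
  simp
  ring

theorem aux_fact' (n : ℕ) (α β : Fin n → ℝ)
    (hα : ∀ i, α i ∈ Set.Ioc (0 : ℝ) 2) (u v ε : Fin n → ℝ) :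
      (∑ δ : Fin n → Bool, ∑ η : Fin n → Bool,
          (-1 : ℝ) ^ ((∑ i, (if δ i then 1 else 0)) + ∑ i, (if η i then 1 else 0) : ℕ) *
            ∏ i, (1 + |ε i * ((if δ i then u i else 0) - (if η i then v i else 0))| ^ α i)
              ^ (-(β i)))
        = ∏ i, (1 - (1 + |ε i * u i| ^ α i) ^ (-(β i)) - (1 + |ε i * v i| ^ α i) ^ (-(β i))
            + (1 + |ε i * (u i - v i)| ^ α i) ^ (-(β i))) := by
  have h := aux_fact n (fun i a b =>
    (1 + |ε i * ((if a then u i else 0) - (if b then v i else 0))| ^ α i) ^ (-(β i)))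
  refine h.trans (Finset.prod_congr rfl fun i _ => ?_)
  have h0 : (0 : ℝ) ^ α i = 0 := Real.zero_rpow (hα i).1.ne'
  simp [h0]

theorem aux_lim (a b c : ℝ) (ha : 0 < a) :
    Tendsto (fun e : ℝ => (e ^ a)⁻¹ * (1 - (1 + |e * c| ^ a) ^ (-b)))
      (nhdsWithin 0 (Set.Ioi 0)) (nhds (b * |c| ^ a)) := by
  have hd : HasDerivAt (fun x : ℝ => 1 - (1 + x * |c| ^ a) ^ (-b)) (b * |c| ^ a) 0 := by
    have h1 : HasDerivAt (fun x : ℝ => 1 + x * |c| ^ a) (|c| ^ a) 0 := by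
      simpa using ((hasDerivAt_id (0 : ℝ)).mul_const (|c| ^ a)).const_add 1
    have h2 := (h1.rpow_const (p := -b) (Or.inl (by simp))).const_sub 1
    refine h2.congr_deriv ?_
    simp
    ring
  have ht : Tendsto (fun e : ℝ => e ^ a) (nhdsWithin 0 (Set.Ioi 0)) (nhdsWithin 0 {0}ᶜ) := by
    refine tendsto_nhdsWithin_iff.2 ⟨?_, ?_⟩
    · have := (Real.continuousAt_rpow_const 0 a (Or.inr ha.le)).tendsto
      rw [Real.zero_rpow ha.ne'] at this
      exact this.mono_left nhdsWithin_le_nhds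
    · filter_upwards [self_mem_nhdsWithin] with e he
      exact (Real.rpow_pos_of_pos he a).ne'
  have hs := (hasDerivAt_iff_tendsto_slope.1 hd).comp ht
  refine hs.congr' ?_
  filter_upwards [self_mem_nhdsWithin] with e he
  have he' : (0 : ℝ) < e := he
  simp [slope, abs_mul, abs_of_pos he', Real.mul_rpow he'.le (abs_nonneg c)]

/-- Total-increment covariance of the GSGCC: it factorizes over coordinates, and after
normalization by `Π εᵢ^{αᵢ}` converges, as each `εᵢ → 0⁺`, to
`Πᵢ βᵢ(|uᵢ|^{αᵢ} + |vᵢ|^{αᵢ} − |uᵢ−vᵢ|^{αᵢ})`, which up to the factor `Πᵢ 2βᵢ` is the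
covariance of the fractional Brownian sheet of index `α/2`. -/
theorem gsgcc_total_increment_covariance (n : ℕ) (hn : 1 ≤ n) (α β : Fin n → ℝ)
    (hα : ∀ i, α i ∈ Set.Ioc (0 : ℝ) 2) (hβ : ∀ i, 0 < β i) (u v : Fin n → ℝ) :
    (∀ ε : Fin n → ℝ, (∀ i, 0 < ε i) →
      (∑ δ : Fin n → Bool, ∑ η : Fin n → Bool,
          (-1 : ℝ) ^ ((∑ i, (if δ i then 1 else 0)) + ∑ i, (if η i then 1 else 0) : ℕ) *
            ∏ i, (1 + |ε i * ((if δ i then u i else 0) - (if η i then v i else 0))| ^ α i)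
              ^ (-(β i)))
        = ∏ i, (1 - (1 + |ε i * u i| ^ α i) ^ (-(β i)) - (1 + |ε i * v i| ^ α i) ^ (-(β i))
            + (1 + |ε i * (u i - v i)| ^ α i) ^ (-(β i))))
    ∧ Tendsto (fun ε : Fin n → ℝ => (∏ i, ε i ^ α i)⁻¹ *
          ∑ δ : Fin n → Bool, ∑ η : Fin n → Bool,
            (-1 : ℝ) ^ ((∑ i, (if δ i then 1 else 0)) + ∑ i, (if η i then 1 else 0) : ℕ) *
              ∏ i, (1 + |ε i * ((if δ i then u i else 0) - (if η i then v i else 0))| ^ α i)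
                ^ (-(β i)))
        (Filter.pi fun _ : Fin n => nhdsWithin 0 (Set.Ioi 0))
        (nhds (∏ i, β i * (|u i| ^ α i + |v i| ^ α i - |u i - v i| ^ α i))) := by
  refine ⟨fun ε _ => aux_fact' n α β hα u v ε, ?_⟩
  have hlim : Tendsto (fun ε : Fin n → ℝ => ∏ i, ((ε i ^ α i)⁻¹ *
      (1 - (1 + |ε i * u i| ^ α i) ^ (-(β i)) - (1 + |ε i * v i| ^ α i) ^ (-(β i))
            + (1 + |ε i * (u i - v i)| ^ α i) ^ (-(β i)))))
      (Filter.pi fun _ : Fin n => nhdsWithin 0 (Set.Ioi 0))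
      (nhds (∏ i, β i * (|u i| ^ α i + |v i| ^ α i - |u i - v i| ^ α i))) := by
    refine tendsto_finsetProd _ fun i _ => ?_
    have h := ((aux_lim (α i) (β i) (u i) (hα i).1).add
      (aux_lim (α i) (β i) (v i) (hα i).1)).sub (aux_lim (α i) (β i) (u i - v i) (hα i).1)
    have h' := h.comp (tendsto_eval_pi (fun _ : Fin n => nhdsWithin (0 : ℝ) (Set.Ioi 0)) i)
    convert h' using 2
    · simp only [Function.comp, Function.eval]
      ring
    · ring
  refine hlim.congr fun ε => ?_
  rw [aux_fact' n α β hα u v ε, Finset.prod_mul_distrib, Finset.prod_inv_distrib]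
end

section
/- Let n ≥ 1, α ∈ (0,2]ⁿ, β ∈ (0,∞)ⁿ, and M > 0. Then there exist constants 0 < c₁ ≤ c₂ such that for all x ∈ ℝⁿ with |xᵢ| ≤ M for every i, c₁ Σ_{i=1}^n |xᵢ|^{αᵢ} ≤ 1 − Π_{i=1}^n (1 + |xᵢ|^{αᵢ})^{−βᵢ} ≤ c₂ Σ_{i=1}^n |xᵢ|^{αᵢ}. (Since the increment variance of the GSGCC is ⟨[X^#(t) − X^#(s)]²⟩ = 2(1 − C^#_{α,β}(t−s)), this gives the two-sided increment-variance bound over any hyperrectangle used to compute the Hausdorff dimension of the graph of GSGCC.) -/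
open Finset

/-- Two-sided increment-variance bound for the GSGCC over a hyperrectangle: for
`α ∈ (0,2]ⁿ`, `β ∈ (0,∞)ⁿ` and `M > 0`, there are constants `0 < c₁ ≤ c₂` such that
`c₁ Σᵢ|xᵢ|^{αᵢ} ≤ 1 − Πᵢ(1+|xᵢ|^{αᵢ})^{−βᵢ} ≤ c₂ Σᵢ|xᵢ|^{αᵢ}` whenever `|xᵢ| ≤ M` for all `i`. -/
theorem gsgcc_increment_variance_bounds (n : ℕ) (hn : 1 ≤ n) (α β : Fin n → ℝ)
    (hα : ∀ i, α i ∈ Set.Ioc (0 : ℝ) 2) (hβ : ∀ i, 0 < β i) (M : ℝ) (hM : 0 < M) :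
    ∃ c₁ c₂ : ℝ, 0 < c₁ ∧ c₁ ≤ c₂ ∧ ∀ x : Fin n → ℝ, (∀ i, |x i| ≤ M) →
      c₁ * ∑ i, |x i| ^ α i ≤ 1 - ∏ i, (1 + |x i| ^ α i) ^ (-(β i)) ∧
      1 - ∏ i, (1 + |x i| ^ α i) ^ (-(β i)) ≤ c₂ * ∑ i, |x i| ^ α i := by
  have hne : Nonempty (Fin n) := ⟨⟨0, hn⟩⟩
  obtain ⟨j, hj⟩ := Finite.exists_min β
  obtain ⟨T, hT⟩ : ∃ T, T = ∑ i, M ^ α i := ⟨_, rfl⟩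
  obtain ⟨K, hK⟩ : ∃ K, K = ∑ i, β i * M ^ α i := ⟨_, rfl⟩
  obtain ⟨B, hB⟩ : ∃ B, B = ∑ i, β i := ⟨_, rfl⟩
  have hp : ∀ i, 0 ≤ M ^ α i := fun i => (Real.rpow_pos_of_pos hM _).le
  have hT0 : 0 ≤ T := hT ▸ Finset.sum_nonneg fun i _ => hp i
  have hK0 : 0 ≤ K := hK ▸ Finset.sum_nonneg fun i _ => mul_nonneg (hβ i).le (hp i)
  have hc : 0 < β j / (1 + T) / (1 + K) := by
    have := hβ j
    positivity
  refine ⟨β j / (1 + T) / (1 + K), max (β j / (1 + T) / (1 + K)) B, hc, le_max_left _ _, ?_⟩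
  intro x hx
  obtain ⟨t, ht⟩ : ∃ t : Fin n → ℝ, t = fun i => |x i| ^ α i := ⟨_, rfl⟩
  have hti : ∀ i, |x i| ^ α i = t i := fun i => by rw [ht]
  simp only [hti]
  have ht0 : ∀ i, 0 ≤ t i := fun i => hti i ▸ Real.rpow_nonneg (abs_nonneg _) _
  have htM : ∀ i, t i ≤ M ^ α i := fun i =>
    hti i ▸ Real.rpow_le_rpow (abs_nonneg _) (hx i) (hα i).1.le
  have htT : ∀ i, t i ≤ T := fun i => (htM i).trans
    (hT ▸ Finset.single_le_sum (f := fun i => M ^ α i) (fun i _ => hp i) (Finset.mem_univ i))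
  obtain ⟨S, hS⟩ : ∃ S, S = ∑ i, β i * Real.log (1 + t i) := ⟨_, rfl⟩
  have hprod : ∏ i, (1 + t i) ^ (-(β i)) = Real.exp (-S) := by
    rw [hS, ← Finset.sum_neg_distrib, Real.exp_sum]
    refine Finset.prod_congr rfl fun i _ => ?_
    rw [Real.rpow_def_of_pos (by linarith [ht0 i])]
    congr 1
    ring
  have hlog : ∀ i, Real.log (1 + t i) ≤ t i := fun i => by
    have := Real.log_le_sub_one_of_pos (show 0 < 1 + t i by linarith [ht0 i])
    linarith
  have hlog2 : ∀ i, t i / (1 + T) ≤ Real.log (1 + t i) := fun i => by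
    have h0 : 0 < 1 + t i := by linarith [ht0 i]
    have h1 := Real.one_sub_inv_le_log_of_pos h0
    have h2 : 1 - (1 + t i)⁻¹ = t i / (1 + t i) := by
      field_simp
      ring
    have h3 : t i / (1 + T) ≤ t i / (1 + t i) :=
      div_le_div_of_nonneg_left (ht0 i) h0 (by linarith [htT i])
    linarith
  have hS1 : S ≤ ∑ i, β i * t i :=
    hS ▸ Finset.sum_le_sum fun i _ => mul_le_mul_of_nonneg_left (hlog i) (hβ i).le
  have hSK : S ≤ K := hS1.trans
    (hK ▸ Finset.sum_le_sum fun i _ => mul_le_mul_of_nonneg_left (htM i) (hβ i).le)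
  have hSB : S ≤ B * ∑ i, t i := by
    refine hS1.trans ?_
    rw [Finset.mul_sum]
    refine Finset.sum_le_sum fun i _ => mul_le_mul_of_nonneg_right ?_ (ht0 i)
    exact hB ▸ Finset.single_le_sum (fun i _ => (hβ i).le) (Finset.mem_univ i)
  have hSl : β j / (1 + T) * ∑ i, t i ≤ S := by
    rw [hS, Finset.mul_sum]
    refine Finset.sum_le_sum fun i _ => ?_
    calc β j / (1 + T) * t i = β j * (t i / (1 + T)) := by ring
      _ ≤ β i * Real.log (1 + t i) :=
        mul_le_mul (hj i) (hlog2 i) (div_nonneg (ht0 i) (by linarith)) (hβ i).le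
  have hsum : 0 ≤ ∑ i, t i := Finset.sum_nonneg fun i _ => ht0 i
  have hS0 : 0 ≤ S := by
    refine le_trans ?_ hSl
    have := hβ j
    positivity
  rw [hprod]
  constructor
  · have h1 : Real.exp (-S) ≤ (1 + S)⁻¹ := by
      rw [Real.exp_neg]
      exact inv_anti₀ (by linarith) (by linarith [Real.add_one_le_exp S])
    have h2 : 1 - (1 + S)⁻¹ = S / (1 + S) := by
      field_simp
      ring
    have h3 : S / (1 + K) ≤ S / (1 + S) :=
      div_le_div_of_nonneg_left hS0 (by linarith) (by linarith)
    have h4 : β j / (1 + T) / (1 + K) * ∑ i, t i ≤ S / (1 + K) := by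
      rw [div_mul_eq_mul_div]
      exact div_le_div_of_nonneg_right hSl (by linarith)
    linarith
  · have h1 := Real.add_one_le_exp (-S)
    have h2 := mul_le_mul_of_nonneg_right (le_max_right (β j / (1 + T) / (1 + K)) B) hsum
    linarith
end

section
/- Let n ≥ 1, α ∈ (0,2], β > 0, and fix t ∈ ℝ₊ⁿ (all coordinates tᵢ > 0). Then ∫_{ℝ₊ⁿ} [ 1 + ( Σ_{i=1}^n (ln(1 + τᵢ/tᵢ))² )^{α/2} ]^{−β} dⁿτ = ∞. (This integrand is the correlation function R(t+τ, t) of both Lamperti transforms Y_{α,β} and 𝕐_{α,β} of the GFGCC, for any H; hence these self-similar Gaussian fields are long range dependent for all α ∈ (0,2] and β > 0.) -/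
open MeasureTheory

/-- Long range dependence of the Lamperti transforms of the GFGCC: for `α ∈ (0,2]`, `β > 0`
and fixed `t ∈ ℝ₊ⁿ`, the correlation function of both `H`-Lamperti transforms of the GFGCC
satisfies `∫_{ℝ₊ⁿ} [1 + (Σᵢ(ln(1+τᵢ/tᵢ))²)^{α/2}]^{−β} dⁿτ = ∞`. -/
theorem gfgcc_lamperti_lrd (n : ℕ) (hn : 1 ≤ n) (α β : ℝ)
    (hα : α ∈ Set.Ioc (0 : ℝ) 2) (hβ : 0 < β) (t : Fin n → ℝ) (ht : ∀ i, 0 < t i) :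
    (∫⁻ τ in {τ : Fin n → ℝ | ∀ i, 0 < τ i},
        ENNReal.ofReal
          ((1 + (∑ i, Real.log (1 + τ i / t i) ^ 2) ^ (α / 2)) ^ (-β))) = ⊤ := by
  obtain ⟨hα0, hα2⟩ := hα
  have hn' : (1 : ℝ) ≤ n := by exact_mod_cast hn
  set P : ℝ := ∏ i, t i with hP
  have hP0 : 0 < P := Finset.prod_pos fun i _ => ht i
  set C : ℝ := (2 * (n : ℝ)) ^ (-β) * P / 2 with hC
  have hC0 : 0 < C := by positivity
  have key : ∀ M : ℝ, 1 ≤ M → ENNReal.ofReal (C * (Real.exp M / M ^ (2 * β))) ≤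
      ∫⁻ τ in {τ : Fin n → ℝ | ∀ i, 0 < τ i}, ENNReal.ofReal
          ((1 + (∑ i, Real.log (1 + τ i / t i) ^ 2) ^ (α / 2)) ^ (-β)) := by
    intro M hM
    have hM0 : 0 < M := by linarith
    have hexp : 2 ≤ Real.exp M := by linarith [Real.add_one_le_exp M]
    set B : Set (Fin n → ℝ) := Set.pi Set.univ fun i => Set.Ioo 0 (t i * (Real.exp M - 1)) with hB
    have hBm : MeasurableSet B := MeasurableSet.univ_pi fun i => measurableSet_Ioo
    have hsub : B ⊆ {τ : Fin n → ℝ | ∀ i, 0 < τ i} := fun τ hτ i => (hτ i (Set.mem_univ i)).1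
    have hM2 : 1 ≤ (n : ℝ) * M ^ 2 := by nlinarith
    have hvol : ENNReal.ofReal (P * (Real.exp M - 1) ^ n) = volume B := by
      rw [hB, Real.volume_pi_Ioo, ← ENNReal.ofReal_prod_of_nonneg]
      · simp only [sub_zero]
        rw [Finset.prod_mul_distrib]
        simp [hP]
      · intro i _
        have := ht i
        nlinarith
    have hlow : ∀ τ ∈ B, (2 * (n : ℝ)) ^ (-β) * M ^ (-(2 * β)) ≤
        (1 + (∑ i, Real.log (1 + τ i / t i) ^ 2) ^ (α / 2)) ^ (-β) := by
      intro τ hτ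
      have hS0 : 0 ≤ ∑ i, Real.log (1 + τ i / t i) ^ 2 := Finset.sum_nonneg fun i _ => sq_nonneg _
      have hS : ∑ i, Real.log (1 + τ i / t i) ^ 2 ≤ n * M ^ 2 := by
        have : ∀ i ∈ Finset.univ, Real.log (1 + τ i / t i) ^ 2 ≤ M ^ 2 := by
          intro i _
          obtain ⟨h1, h2⟩ := hτ i (Set.mem_univ i)
          have hd : 0 < τ i / t i := div_pos h1 (ht i)
          have hd2 : τ i / t i ≤ Real.exp M - 1 := by
            rw [div_le_iff₀ (ht i)]; linarith
          have hl0 : 0 ≤ Real.log (1 + τ i / t i) := Real.log_nonneg (by linarith)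
          have hl1 : Real.log (1 + τ i / t i) ≤ M := by
            rw [Real.log_le_iff_le_exp (by linarith)]; linarith
          exact pow_le_pow_left₀ hl0 hl1 2
        simpa using Finset.sum_le_sum this
      have h1 : (∑ i, Real.log (1 + τ i / t i) ^ 2) ^ (α / 2) ≤ n * M ^ 2 :=
        calc _ ≤ ((n : ℝ) * M ^ 2) ^ (α / 2) := Real.rpow_le_rpow hS0 hS (by linarith)
          _ ≤ ((n : ℝ) * M ^ 2) ^ (1 : ℝ) := Real.rpow_le_rpow_of_exponent_le hM2 (by linarith)
          _ = _ := Real.rpow_one _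
      have h0 := Real.rpow_nonneg hS0 (α / 2)
      calc (2 * (n : ℝ)) ^ (-β) * M ^ (-(2 * β)) = (2 * (n : ℝ) * M ^ 2) ^ (-β) := by
            rw [Real.mul_rpow (x := 2 * (n : ℝ)) (y := M ^ 2) (by positivity) (by positivity), ← Real.rpow_natCast M 2,
              ← Real.rpow_mul hM0.le]
            congr 2
            push_cast
            ring
        _ ≤ _ := Real.rpow_le_rpow_of_nonpos (by linarith) (by linarith) (by linarith)
    have hpow : Real.exp M / 2 ≤ (Real.exp M - 1) ^ n := by
      calc Real.exp M / 2 ≤ Real.exp M - 1 := by linarith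
        _ ≤ _ := le_self_pow₀ (by linarith) (by omega)
    calc ENNReal.ofReal (C * (Real.exp M / M ^ (2 * β)))
        ≤ ENNReal.ofReal (((2 * (n : ℝ)) ^ (-β) * M ^ (-(2 * β))) *
            (P * (Real.exp M - 1) ^ n)) := by
          apply ENNReal.ofReal_le_ofReal
          have e : C * (Real.exp M / M ^ (2 * β)) =
              ((2 * (n : ℝ)) ^ (-β) * M ^ (-(2 * β))) * (P * (Real.exp M / 2)) := by
            rw [hC, Real.rpow_neg hM0.le (2 * β)]
            ring
          rw [e]
          gcongr
      _ = ∫⁻ _ in B, ENNReal.ofReal ((2 * (n : ℝ)) ^ (-β) * M ^ (-(2 * β))) := by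
          rw [setLIntegral_const, ENNReal.ofReal_mul (by positivity), hvol]
      _ ≤ ∫⁻ τ in B, ENNReal.ofReal
          ((1 + (∑ i, Real.log (1 + τ i / t i) ^ 2) ^ (α / 2)) ^ (-β)) :=
          setLIntegral_mono' hBm fun τ hτ => ENNReal.ofReal_le_ofReal (hlow τ hτ)
      _ ≤ _ := lintegral_mono_set hsub
  have hlim : Filter.Tendsto (fun M : ℝ => ENNReal.ofReal (C * (Real.exp M / M ^ (2 * β))))
      Filter.atTop (nhds ⊤) :=
    ENNReal.tendsto_ofReal_atTop.comp
      ((tendsto_exp_div_rpow_atTop (2 * β)).const_mul_atTop hC0)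
  refine top_le_iff.mp (le_of_tendsto hlim ?_)
  filter_upwards [Filter.eventually_ge_atTop 1] with M hM using key M hM
end

section
/- Let n ≥ 1, α ∈ (0,2]ⁿ, β ∈ (0,∞)ⁿ, and fix t ∈ ℝ₊ⁿ (all coordinates tᵢ > 0). Then ∫_{ℝ₊ⁿ} Π_{i=1}^n [ 1 + |ln(1 + τᵢ/tᵢ)|^{αᵢ} ]^{−βᵢ} dⁿτ = ∞. (This integrand is the correlation function R(t+τ, t) of both Lamperti transforms Y^#_{α,β} and 𝕐^#_{α,β} of the GSGCC; hence these (multi-)self-similar Gaussian fields are long range dependent for all admissible α and β.) -/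
open MeasureTheory Finset

lemma factor_bound (a b t : ℝ) (ha : 0 < a) (hb : 0 < b) (ht : 0 < t) :
    ∃ c : ℝ, 0 < c ∧ ∀ s : ℝ, 0 < s → t ≤ s ^ 2 →
      c * s ≤ s ^ 2 * (1 + |Real.log (1 + s ^ 2 / t)| ^ a) ^ (-b) := by
  set e : ℝ := 1 / (2 * a * b) with he
  have hepos : 0 < e := by positivity
  set D : ℝ := (1 + (1 / e) ^ a) ^ b * (2 / t) ^ (1 / 2 : ℝ) with hD
  have hDpos : 0 < D := by positivity
  refine ⟨1 / D, by positivity, ?_⟩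
  intro s hs hts
  set u : ℝ := 1 + s ^ 2 / t with hu
  have hu1 : 1 ≤ u := by
    have : 0 ≤ s ^ 2 / t := by positivity
    linarith
  have hu0 : 0 < u := by linarith
  have hlog0 : 0 ≤ Real.log u := Real.log_nonneg hu1
  rw [abs_of_nonneg hlog0]
  have h1 : Real.log u ≤ u ^ e / e := Real.log_le_rpow_div hu0.le hepos
  have h2 : Real.log u ^ a ≤ (1 / e) ^ a * u ^ (e * a) := by
    calc Real.log u ^ a ≤ (u ^ e / e) ^ a := Real.rpow_le_rpow hlog0 h1 ha.le
      _ = (1 / e * u ^ e) ^ a := by congr 1; ring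
      _ = (1 / e) ^ a * u ^ (e * a) := by
        rw [Real.mul_rpow (by positivity) (by positivity), ← Real.rpow_mul hu0.le]
  have h3 : 1 ≤ u ^ (e * a) := Real.one_le_rpow hu1 (by positivity)
  have h4 : 1 + Real.log u ^ a ≤ (1 + (1 / e) ^ a) * u ^ (e * a) := by
    linarith
  have hB0 : 0 < 1 + Real.log u ^ a := by positivity
  have hu2 : u ≤ 2 / t * s ^ 2 := by
    have : 1 ≤ s ^ 2 / t := by rwa [one_le_div ht]
    have h : 2 / t * s ^ 2 = s ^ 2 / t + s ^ 2 / t := by ring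
    linarith
  have h5 : (1 + Real.log u ^ a) ^ b ≤ D * s := by
    calc (1 + Real.log u ^ a) ^ b ≤ ((1 + (1 / e) ^ a) * u ^ (e * a)) ^ b :=
          Real.rpow_le_rpow hB0.le h4 hb.le
      _ = (1 + (1 / e) ^ a) ^ b * u ^ (1 / 2 : ℝ) := by
        rw [Real.mul_rpow (by positivity) (by positivity), ← Real.rpow_mul hu0.le]
        congr 2
        rw [he]; field_simp
      _ ≤ (1 + (1 / e) ^ a) ^ b * (2 / t * s ^ 2) ^ (1 / 2 : ℝ) := by
        gcongr
      _ = D * s := by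
        rw [Real.mul_rpow (by positivity) (by positivity), ← Real.sqrt_eq_rpow (s ^ 2),
          Real.sqrt_sq hs.le, hD]
        ring
  rw [Real.rpow_neg hB0.le, ← div_eq_mul_inv, le_div_iff₀ (by positivity)]
  calc 1 / D * s * (1 + Real.log u ^ a) ^ b ≤ 1 / D * s * (D * s) := by gcongr
    _ = s ^ 2 := by field_simp

/-- Long range dependence of the Lamperti transforms of the GSGCC: for `α ∈ (0,2]ⁿ`,
`β ∈ (0,∞)ⁿ` and fixed `t ∈ ℝ₊ⁿ`, the correlation function of both `H`-Lamperti transforms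
of the GSGCC satisfies `∫_{ℝ₊ⁿ} Πᵢ[1 + |ln(1+τᵢ/tᵢ)|^{αᵢ}]^{−βᵢ} dⁿτ = ∞`. -/
theorem gsgcc_lamperti_lrd (n : ℕ) (hn : 1 ≤ n) (α β : Fin n → ℝ)
    (hα : ∀ i, α i ∈ Set.Ioc (0 : ℝ) 2) (hβ : ∀ i, 0 < β i)
    (t : Fin n → ℝ) (ht : ∀ i, 0 < t i) :
    (∫⁻ τ in {τ : Fin n → ℝ | ∀ i, 0 < τ i},
        ENNReal.ofReal
          (∏ i, (1 + |Real.log (1 + τ i / t i)| ^ α i) ^ (-(β i)))) = ⊤ := by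
  choose c hc hcb using fun i => factor_bound (α i) (β i) (t i) (hα i).1 (hβ i) (ht i)
  have hC : 0 < ∏ i, c i := Finset.prod_pos fun i _ => hc i
  have key : ∀ s : ℝ, 1 ≤ s → (∀ i, t i ≤ s) →
      ENNReal.ofReal ((∏ i, c i) * s) ≤ ∫⁻ τ in {τ : Fin n → ℝ | ∀ i, 0 < τ i},
        ENNReal.ofReal
          (∏ i, (1 + |Real.log (1 + τ i / t i)| ^ α i) ^ (-(β i))) := by
    intro s hs hts
    have hs0 : 0 < s := by linarith
    have hts2 : ∀ i, t i ≤ s ^ 2 := fun i => (hts i).trans (by nlinarith)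
    set box : Set (Fin n → ℝ) := Set.univ.pi fun _ => Set.Ioc (0 : ℝ) (s ^ 2) with hbox
    have hmeas : MeasurableSet box := MeasurableSet.univ_pi fun _ => measurableSet_Ioc
    have hsub : box ⊆ {τ : Fin n → ℝ | ∀ i, 0 < τ i} := fun τ h i => (h i trivial).1
    have hvol : volume box = ENNReal.ofReal ((s ^ 2) ^ n) := by
      rw [hbox, volume_pi_pi]
      simp [ENNReal.ofReal_pow, hs0.le]
    set F : ℝ := ∏ i, (1 + |Real.log (1 + s ^ 2 / t i)| ^ α i) ^ (-(β i)) with hF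
    have hF0 : 0 ≤ F := Finset.prod_nonneg fun i _ => by positivity
    calc ENNReal.ofReal ((∏ i, c i) * s) ≤ ENNReal.ofReal (F * (s ^ 2) ^ n) := by
          apply ENNReal.ofReal_le_ofReal
          calc (∏ i, c i) * s ≤ (∏ i, c i) * s ^ n := by
                gcongr
                exact le_self_pow₀ hs (by omega)
            _ = ∏ i, (c i * s) := by simp [Finset.prod_mul_distrib]
            _ ≤ ∏ i, (s ^ 2 * (1 + |Real.log (1 + s ^ 2 / t i)| ^ α i) ^ (-(β i))) :=
              Finset.prod_le_prod (fun i _ => (mul_pos (hc i) hs0).le)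
                fun i _ => hcb i s hs0 (hts2 i)
            _ = F * (s ^ 2) ^ n := by
              rw [Finset.prod_mul_distrib, hF, mul_comm]; simp
      _ = ∫⁻ _ in box, ENNReal.ofReal F := by
          rw [setLIntegral_const, hvol, ENNReal.ofReal_mul hF0]
      _ ≤ ∫⁻ τ in box, ENNReal.ofReal
          (∏ i, (1 + |Real.log (1 + τ i / t i)| ^ α i) ^ (-(β i))) := by
          apply setLIntegral_mono' hmeas
          intro τ hτ
          apply ENNReal.ofReal_le_ofReal
          apply Finset.prod_le_prod (fun i _ => by positivity)
          intro i _
          have hi := hτ i trivial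
          have hti := ht i
          have h0 : 0 ≤ τ i / t i := div_nonneg hi.1.le hti.le
          have h1 : τ i / t i ≤ s ^ 2 / t i := by
            have := hi.2
            gcongr
          have hl0 : 0 ≤ Real.log (1 + τ i / t i) := Real.log_nonneg (by linarith)
          have hl1 : Real.log (1 + τ i / t i) ≤ Real.log (1 + s ^ 2 / t i) :=
            Real.log_le_log (by linarith) (by linarith)
          apply Real.rpow_le_rpow_of_nonpos (by positivity) _ (by linarith [hβ i])
          rw [abs_of_nonneg hl0, abs_of_nonneg (hl0.trans hl1)]
          have := Real.rpow_le_rpow hl0 hl1 (hα i).1.le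
          linarith
      _ ≤ _ := lintegral_mono_set hsub
  apply ENNReal.eq_top_of_forall_nnreal_le
  intro r
  set s : ℝ := 1 + (∑ i, t i) + r / (∏ i, c i) with hs
  have hsum : 0 ≤ ∑ i, t i := Finset.sum_nonneg fun i _ => (ht i).le
  have hr : 0 ≤ (r : ℝ) / (∏ i, c i) := by positivity
  refine le_trans ?_ (key s (by linarith) fun i => ?_)
  · rw [← ENNReal.ofReal_coe_nnreal]
    apply ENNReal.ofReal_le_ofReal
    have h : (r : ℝ) = (∏ i, c i) * (r / (∏ i, c i)) := by field_simp
    rw [h]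
    gcongr
    linarith
  · have := Finset.single_le_sum (f := t) (fun i _ => (ht i).le) (Finset.mem_univ i)
    linarith
end
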